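/- arXiv:2409.05315 — 5 statements merged into one kernel-verified Lean document; each statement's English description precedes it below -/
import Mathlib

section
/- A social choice function f : (Fin n → Bool) → Bool is strategy-proof if and only if it is an extended majority voting rule, i.e., there exists a committee C (a monotone family of Finsets of Fin n) such that for every profile P : Fin n → Bool, f P = true if and only if the set {i : P i = true} belongs to C. -/
/-!
Strategy-proofness amounts to monotonicity of `f` in the pointwise order on profiles (`false < true`).
An agent preferring `y` who could move the outcome from `x` to `y` by reporting `x` would gain by doing
so, hence turning one vote from `y` to `x` never destroys the outcome `x`; iterating over a finite set
of agents gives monotonicity, and the committee is the family of supporter sets at which `f` selects `x`.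
Conversely, under a committee a misreport can only shrink the set of supporters of the alternative that
the agent really prefers, so it never helps.
-/

/-- Agent `i` with preference `b` (true = prefers `x`) weakly prefers outcome `a`
to outcome `a'` iff `a = a'` or `a = b`. -/
def WeaklyPrefers (b a a' : Bool) : Prop := a = a' ∨ a = b

/-- A social choice function `f` is strategy-proof if for every agent `i`, every
profile `P` and every report `b`, agent `i` with preference `P i` weakly prefers
`f P` to `f (Function.update P i b)`. -/
def StrategyProof {n : ℕ} (f : (Fin n → Bool) → Bool) : Prop :=
  ∀ (i : Fin n) (P : Fin n → Bool) (b : Bool),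
    WeaklyPrefers (P i) (f P) (f (Function.update P i b))

/-- A committee is a monotone family of finsets of agents. -/
def IsCommittee {n : ℕ} (C : Set (Finset (Fin n))) : Prop :=
  ∀ T T' : Finset (Fin n), T ∈ C → T ⊆ T' → T' ∈ C

/-- Under a strategy-proof rule, adding a finite set of agents to the supporters of `x` preserves
the outcome `x`. -/
theorem StrategyProof.union_supporters {n : ℕ} {f : (Fin n → Bool) → Bool} (hf : StrategyProof f)
    (T S : Finset (Fin n)) (hT : f (fun i => decide (i ∈ T)) = true) :
    f (fun i => decide (i ∈ T ∪ S)) = true := by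
  induction S using Finset.induction_on with
  | empty => simpa using hT
  | insert a S _ ih =>
    by_cases ha : a ∈ T ∪ S
    · rwa [Finset.union_insert, Finset.insert_eq_of_mem ha]
    · have hupd : Function.update (fun i => decide (i ∈ T ∪ S)) a true =
          fun i => decide (i ∈ T ∪ insert a S) := by
        funext j
        by_cases hj : j = a
        · subst hj; simp
        · simp [hj]
      -- At the profile `T ∪ S` agent `a` prefers `y`, but the outcome is `x`.
      have h := hf a (fun i => decide (i ∈ T ∪ S)) true
      rw [hupd] at h
      rcases h with h | h
      · rw [← h]; exact ih
      · rw [ih] at h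
        simp [ha] at h

/-- A social choice function `f : (Fin n → Bool) → Bool` is strategy-proof if and
only if it is an extended majority voting rule, i.e. there is a committee `C`
(a monotone family of finsets of `Fin n`) such that for every profile `P`,
`f P = true` iff the set of agents preferring `x` belongs to `C`. -/
theorem strategyProof_iff_extendedMajorityVotingRule
    (n : ℕ) (hn : 1 ≤ n) (f : (Fin n → Bool) → Bool) :
    StrategyProof f ↔
      ∃ C : Set (Finset (Fin n)), IsCommittee C ∧
        ∀ P : Fin n → Bool,
          (f P = true ↔ (Finset.univ.filter fun i => P i = true) ∈ C) := by
  constructor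
  · intro hf
    refine ⟨{T | f (fun i => decide (i ∈ T)) = true}, ?_, ?_⟩
    · intro T T' hT hTT'
      have h := hf.union_supporters T T' hT
      rwa [Finset.union_eq_right.mpr hTT'] at h
    · intro P
      simp
  · rintro ⟨C, hC, hfC⟩ i P b
    have mono : ∀ P Q : Fin n → Bool, (∀ j, P j = true → Q j = true) →
        f P = true → f Q = true := fun P Q h hP =>
      (hfC Q).mpr (hC _ _ ((hfC P).mp hP) fun j hj => by simpa using h j (by simpa using hj))
    unfold WeaklyPrefers
    cases hi : P i
    · have := mono P (Function.update P i b) fun j hj => by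
        rwa [Function.update_of_ne (by rintro rfl; simp [hi] at hj)]
      cases hP : f P
      · exact Or.inr rfl
      · exact Or.inl (this hP).symm
    · have := mono (Function.update P i b) P fun j hj => by
        by_cases h : j = i
        · rwa [h]
        · rwa [Function.update_of_ne h] at hj
      cases hQ : f (Function.update P i b)
      · cases f P <;> simp
      · exact Or.inl (this hQ)
end

section
/- Let (S_1, …, S_K) be an ordered partition of Fin n and let C be a nontrivial committee on Fin n that is anonymous relative to the partition {S_1, …, S_K} and such that conditions (i)–(ii) hold at every index k ∈ {1, …, K}. Then there exists a quota vector Q = (q_1, …, q_K) compatible with (S_1, …, S_K) such that the family of minimal winning coalitions of C equals C_{(S_1,…,S_K),Q}, i.e., C_m = C_{(S_1,…,S_K),Q}. -/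
/-!
Membership in `C` depends monotonically on the profile `k ↦ |T ∩ S k|`, because an agent of `T` can
be exchanged with any agent of its own block (`mem_of_profile_le`).

Since no agent is a dummy, there is a minimal winning coalition `M₀` containing some agent `i₀` of
the last block. Put `Q k = |(M₀ \ {i₀}) ∩ S k|`. Two facts follow:

* a coalition whose profile is at most `Q` everywhere loses, because `M₀ \ {i₀}` loses;
* a coalition meeting the quota in every block before `S k` and exceeding it in `S k` wins: by
  condition (ii) applied to `M₀` when `k` is not last, and by comparison with `M₀` when it is.

If `M` is minimal winning, the first fact gives a first block `S k` in which `M` exceeds its quota,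
and for `j < k` neither `M ∩ (S 0 ∪ ⋯ ∪ S j)` nor `M₀ ∩ (S 0 ∪ ⋯ ∪ S j)` wins, so condition (i)
says that `M` meets each earlier quota exactly (`exists_pivot`). By the second fact `M` has a winning
subset in `C_{S^o,Q}`, so by minimality `M` is that subset. Conversely, a winning subset of
`M ∈ C_{S^o,Q}` contains a minimal winning coalition, whose pivotal block has to be that of `M`, so
the two profiles agree and nothing has been removed.
-/

/-- `S` is an ordered partition of `Fin n` into `K + 1` pairwise disjoint
nonempty blocks `S 0, …, S (Fin.last K)` whose union is all of `Fin n`. -/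
def IsOrderedPartition {n K : ℕ} (S : Fin (K + 1) → Finset (Fin n)) : Prop :=
  (∀ k, (S k).Nonempty) ∧
  (∀ k l, k ≠ l → Disjoint (S k) (S l)) ∧
  Finset.univ.biUnion S = Finset.univ

/-- The quota vector `Q` is compatible with the ordered partition `S`:
`Q k ≤ |S k|` for every block and `Q` is strictly below the size of the
last block. -/
def CompatibleQuotas {n K : ℕ} (S : Fin (K + 1) → Finset (Fin n))
    (Q : Fin (K + 1) → ℕ) : Prop :=
  (∀ k, Q k ≤ (S k).card) ∧ Q (Fin.last K) < (S (Fin.last K)).card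

/-- The family `C_{S^o,Q}`: the union over `k` of the families `C_{S^o,Q}(k)`
of all sets of the form `(T 0 ∪ ⋯ ∪ T k) ∪ {i}` where `T t ⊆ S t` with
`|T t| = Q t` for each `t ≤ k` and `i ∈ S k \ T k`. -/
def CSQ {n K : ℕ} (S : Fin (K + 1) → Finset (Fin n)) (Q : Fin (K + 1) → ℕ) :
    Set (Finset (Fin n)) :=
  { M | ∃ (k : Fin (K + 1)) (T : Fin (K + 1) → Finset (Fin n)) (i : Fin n),
      (∀ t, t ≤ k → T t ⊆ S t ∧ (T t).card = Q t) ∧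
      i ∈ S k ∧ i ∉ T k ∧
      M = (Finset.univ.filter fun t => t ≤ k).biUnion T ∪ {i} }

/-- `M` is a minimal winning coalition of the committee `C`. -/
def IsMinimalWinning {n : ℕ} (C : Set (Finset (Fin n))) (M : Finset (Fin n)) : Prop :=
  M ∈ C ∧ ∀ T ∈ C, ¬ T ⊂ M

/-- The union `S 0 ∪ ⋯ ∪ S k` of the first blocks of the ordered partition. -/
def blocksUpTo {n K : ℕ} (S : Fin (K + 1) → Finset (Fin n)) (k : Fin (K + 1)) :
    Finset (Fin n) :=
  (Finset.univ.filter fun t => t ≤ k).biUnion S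

/-! ### Monotonicity in the profile -/

/-- A committee invariant under block-preserving permutations is monotone in the profile
`k ↦ |T ∩ S k|`: swapping an agent of `T \ T'` with an agent of `T' \ T` of the same block decreases
`T \ T'` and keeps the profile of `T`. -/
theorem mem_of_profile_le {n K : ℕ} {S : Fin (K + 1) → Finset (Fin n)} (hS : IsOrderedPartition S)
    {C : Set (Finset (Fin n))}
    (hmono : ∀ T T' : Finset (Fin n), T ∈ C → T ⊆ T' → T' ∈ C)
    (hanon : ∀ π : Equiv.Perm (Fin n), (∀ k, (S k).image π = S k) →
      ∀ M ∈ C, M.image π ∈ C) (T' : Finset (Fin n)) :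
    ∀ (m : ℕ) (T : Finset (Fin n)), (T \ T').card = m → T ∈ C →
      (∀ k, (T ∩ S k).card ≤ (T' ∩ S k).card) → T' ∈ C := by
  intro m
  induction m using Nat.strong_induction_on with
  | _ m ih =>
    intro T hm hT hle
    by_cases hsub : T ⊆ T'
    · exact hmono T T' hT hsub
    obtain ⟨a, haT, haT'⟩ := Finset.not_subset.mp hsub
    have hau : a ∈ Finset.univ.biUnion S := by rw [hS.2.2]; exact Finset.mem_univ a
    obtain ⟨k, -, hak⟩ := Finset.mem_biUnion.mp hau
    obtain ⟨b, hb', hb⟩ : ∃ b ∈ T' ∩ S k, b ∉ T ∩ S k := by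
      by_contra! h
      have hss : T' ∩ S k ⊂ T ∩ S k := by
        refine (Finset.ssubset_iff_of_subset h).mpr ⟨a, by simp [haT, hak], by simp [haT']⟩
      exact absurd (Finset.card_lt_card hss) (not_lt.mpr (hle k))
    simp only [Finset.mem_inter] at hb hb'
    have hbT : b ∉ T := fun h => hb ⟨h, hb'.2⟩
    have hpres : ∀ j, (S j).image (Equiv.swap a b) = S j := by
      intro j
      have hab : a ∈ S j ↔ b ∈ S j := by
        by_cases hjk : j = k
        · subst hjk; simp [hak, hb'.2]
        · have hd := Finset.disjoint_left.mp (hS.2.1 j k hjk)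
          exact ⟨fun h => absurd hak (hd h), fun h => absurd hb'.2 (hd h)⟩
      refine Finset.eq_of_subset_of_card_le ?_ ?_
      · intro x hx
        obtain ⟨y, hy, rfl⟩ := Finset.mem_image.mp hx
        rw [Equiv.swap_apply_def]
        split_ifs with h1 h2
        · subst h1; exact hab.mp hy
        · subst h2; exact hab.mpr hy
        · exact hy
      · rw [Finset.card_image_of_injective _ (Equiv.swap a b).injective]
    refine ih _ ?_ (T.image (Equiv.swap a b)) rfl (hanon _ hpres T hT) ?_
    · rw [← hm]
      refine Finset.card_lt_card ((Finset.ssubset_iff_of_subset ?_).mpr ⟨a, ?_, ?_⟩)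
      · intro x hx
        obtain ⟨hx, hxT'⟩ := Finset.mem_sdiff.mp hx
        obtain ⟨y, hy, rfl⟩ := Finset.mem_image.mp hx
        have hyb : y ≠ b := fun h => hbT (h ▸ hy)
        by_cases hya : y = a
        · subst hya; simp [hb'.1] at hxT'
        · rw [Equiv.swap_apply_of_ne_of_ne hya hyb] at hxT' ⊢
          exact Finset.mem_sdiff.mpr ⟨hy, hxT'⟩
      · exact Finset.mem_sdiff.mpr ⟨haT, haT'⟩
      · intro h
        obtain ⟨y, hy, hya⟩ := Finset.mem_image.mp (Finset.mem_sdiff.mp h).1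
        rw [Equiv.swap_apply_eq_iff, Equiv.swap_apply_left] at hya
        exact hbT (hya ▸ hy)
    · intro j
      have : T.image (Equiv.swap a b) ∩ S j = (T ∩ S j).image (Equiv.swap a b) := by
        rw [Finset.image_inter _ _ (Equiv.swap a b).injective, hpres j]
      rw [this, Finset.card_image_of_injective _ (Equiv.swap a b).injective]
      exact hle j

/-! ### Minimal winning coalitions and their pivotal blocks -/

theorem exists_minimalWinning_subset {n : ℕ} (C : Set (Finset (Fin n))) (W : Finset (Fin n))
    (hW : W ∈ C) : ∃ M, IsMinimalWinning C M ∧ M ⊆ W := by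
  induction W using Finset.strongInductionOn with
  | _ W ih =>
    by_cases h : ∃ T ∈ C, T ⊂ W
    · obtain ⟨T, hT, hTW⟩ := h
      obtain ⟨M, hM, hMT⟩ := ih T hTW hT
      exact ⟨M, hM, hMT.trans hTW.subset⟩
    · push Not at h
      exact ⟨W, ⟨hW, h⟩, subset_rfl⟩

theorem mem_blocksUpTo {n K : ℕ} {S : Fin (K + 1) → Finset (Fin n)} {k : Fin (K + 1)} {x : Fin n} :
    x ∈ blocksUpTo S k ↔ ∃ t, t ≤ k ∧ x ∈ S t := by
  simp [blocksUpTo]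

theorem inter_blocksUpTo_inter_of_lt {n K : ℕ} {S : Fin (K + 1) → Finset (Fin n)}
    (hS : IsOrderedPartition S) (M : Finset (Fin n)) {j k : Fin (K + 1)} (h : k < j) :
    (M ∩ blocksUpTo S k) ∩ S j = ∅ := by
  refine Finset.eq_empty_of_forall_notMem fun x hx => ?_
  simp only [Finset.mem_inter, mem_blocksUpTo] at hx
  obtain ⟨⟨-, t, ht, hxt⟩, hxj⟩ := hx
  exact Finset.disjoint_left.mp (hS.2.1 t j (by rintro rfl; exact absurd h (not_lt.mpr ht))) hxt hxj

/-- A minimal winning coalition has a pivotal block: its first block above quota, before which it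
meets every quota exactly. Here `Q` is given through a coalition `M₀` that realises it before the
last block, where the truncations of `M₀` lose. -/
theorem exists_pivot {n K : ℕ} {S : Fin (K + 1) → Finset (Fin n)} (hS : IsOrderedPartition S)
    {C : Set (Finset (Fin n))}
    (hcond1 : ∀ (k : Fin (K + 1)) (M M' : Finset (Fin n)),
      IsMinimalWinning C M → IsMinimalWinning C M' →
      M ∩ blocksUpTo S k ∉ C → M' ∩ blocksUpTo S k ∉ C →
      (M ∩ S k).card = (M' ∩ S k).card)
    {Q : Fin (K + 1) → ℕ} {M₀ : Finset (Fin n)} (hM₀ : IsMinimalWinning C M₀)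
    (hQ : ∀ k, k < Fin.last K → (M₀ ∩ S k).card = Q k)
    (hlose : ∀ k, k < Fin.last K → M₀ ∩ blocksUpTo S k ∉ C)
    (hA : ∀ T : Finset (Fin n), (∀ k, (T ∩ S k).card ≤ Q k) → T ∉ C)
    {M : Finset (Fin n)} (hM : IsMinimalWinning C M) :
    ∃ k, (∀ j, j < k → (M ∩ S j).card = Q j) ∧ Q k < (M ∩ S k).card := by
  obtain ⟨k, hk, hmin⟩ := wellFounded_lt.has_min {k | Q k < (M ∩ S k).card} (by
    by_contra h
    rw [Set.not_nonempty_iff_eq_empty, Set.eq_empty_iff_forall_notMem] at h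
    exact hA M (fun k => not_lt.mp (h k)) hM.1)
  refine ⟨k, fun j hj => ?_, hk⟩
  have hjl : j < Fin.last K := lt_of_lt_of_le hj (Fin.le_last k)
  rw [← hQ j hjl]
  refine hcond1 j M M₀ hM hM₀ (hA _ fun l => ?_) (hlose j hjl)
  rcases le_or_gt l j with h | h
  · refine le_trans (Finset.card_le_card
      (Finset.inter_subset_inter_right Finset.inter_subset_left)) ?_
    exact not_lt.mp fun hlt => hmin l hlt (lt_of_le_of_lt h hj)
  · rw [inter_blocksUpTo_inter_of_lt hS M h]; simp

/-! ### The quota representation -/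

/-- Let `(S 0, …, S (Fin.last K))` be an ordered partition of `Fin n` and `C` a
nontrivial committee that is anonymous relative to the partition (no dummy
agents, and invariant under block-preserving permutations), satisfying at every
index `k` the conditions (i) (any two minimal winning coalitions whose
intersections with `S 0 ∪ ⋯ ∪ S k` are not winning meet `S k` in the same
number of agents) and (ii) (if a minimal winning coalition `M` has non-winning
intersection with `S 0 ∪ ⋯ ∪ S k` and `i ∈ S k \ M`, then
`(M ∩ (S 0 ∪ ⋯ ∪ S k)) ∪ {i}` is winning).  Then there is a compatible quota
vector `Q` such that the minimal winning coalitions of `C` are exactly the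
members of `C_{S^o,Q}`. -/
theorem minimalWinning_eq_CSQ
    (n K : ℕ) (hn : 1 ≤ n)
    (S : Fin (K + 1) → Finset (Fin n)) (hS : IsOrderedPartition S)
    (C : Set (Finset (Fin n)))
    (hmono : ∀ T T' : Finset (Fin n), T ∈ C → T ⊆ T' → T' ∈ C)
    (hne : C.Nonempty) (hempty : ∅ ∉ C)
    (hnodummy : ∀ i : Fin n, ∃ M : Finset (Fin n), IsMinimalWinning C M ∧ i ∈ M)
    (hanon : ∀ π : Equiv.Perm (Fin n), (∀ k, (S k).image π = S k) →
      ∀ M ∈ C, M.image π ∈ C)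
    (hcond1 : ∀ (k : Fin (K + 1)) (M M' : Finset (Fin n)),
      IsMinimalWinning C M → IsMinimalWinning C M' →
      M ∩ blocksUpTo S k ∉ C → M' ∩ blocksUpTo S k ∉ C →
      (M ∩ S k).card = (M' ∩ S k).card)
    (hcond2 : ∀ (k : Fin (K + 1)) (M : Finset (Fin n)),
      IsMinimalWinning C M → M ∩ blocksUpTo S k ∉ C →
      ∀ i ∈ S k, i ∉ M → (M ∩ blocksUpTo S k) ∪ {i} ∈ C) :
    ∃ Q : Fin (K + 1) → ℕ, CompatibleQuotas S Q ∧
      ∀ M : Finset (Fin n), IsMinimalWinning C M ↔ M ∈ CSQ S Q := by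
  classical
  obtain ⟨i₀, hi₀⟩ := hS.1 (Fin.last K)
  obtain ⟨M₀, hM₀, hiM₀⟩ := hnodummy i₀
  have prof : ∀ T T' : Finset (Fin n), T ∈ C →
      (∀ k, (T ∩ S k).card ≤ (T' ∩ S k).card) → T' ∈ C :=
    fun T T' => mem_of_profile_le hS hmono hanon T' _ T rfl
  have hLose : M₀.erase i₀ ∉ C := fun h => hM₀.2 _ h (Finset.erase_ssubset hiM₀)
  have hi₀lt : ∀ k, k < Fin.last K → i₀ ∉ S k := fun k hk h =>
    Finset.disjoint_left.mp (hS.2.1 k _ hk.ne) h hi₀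
  set Q : Fin (K + 1) → ℕ := fun k => (M₀.erase i₀ ∩ S k).card with hQdef
  have hQ : ∀ k, k < Fin.last K → (M₀ ∩ S k).card = Q k := by
    intro k hk
    simp only [hQdef, Finset.erase_inter]
    rw [Finset.erase_eq_of_notMem]
    simp [hi₀lt k hk]
  have hQlast : (M₀ ∩ S (Fin.last K)).card = Q (Fin.last K) + 1 := by
    simp only [hQdef, Finset.erase_inter]
    rw [Finset.card_erase_add_one]
    simp [hi₀, hiM₀]
  have hlose : ∀ k, k < Fin.last K → M₀ ∩ blocksUpTo S k ∉ C := by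
    intro k hk h
    refine hLose (hmono _ _ h fun x hx => ?_)
    obtain ⟨hx, hxk⟩ := Finset.mem_inter.mp hx
    obtain ⟨t, ht, hxt⟩ := mem_blocksUpTo.mp hxk
    refine Finset.mem_erase.mpr ⟨?_, hx⟩
    rintro rfl
    exact hi₀lt t (lt_of_le_of_lt ht hk) hxt
  have hA : ∀ T : Finset (Fin n), (∀ k, (T ∩ S k).card ≤ Q k) → T ∉ C :=
    fun T hT h => hLose (prof T _ h hT)
  have hB : ∀ (T : Finset (Fin n)) (k : Fin (K + 1)), (∀ j, j < k → Q j ≤ (T ∩ S j).card) →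
      Q k < (T ∩ S k).card → T ∈ C := by
    intro T k hj hk
    rcases (Fin.le_last k).lt_or_eq with hkl | rfl
    · -- `T` witnesses that the quota does not fill `S k`, which provides an agent for (ii).
      have hlt : (M₀ ∩ S k).card < (S k).card := by
        rw [hQ k hkl]; exact hk.trans_le (Finset.card_le_card Finset.inter_subset_right)
      obtain ⟨i, hi, hiM⟩ := Finset.exists_mem_notMem_of_card_lt_card hlt
      have hiM' : i ∉ M₀ := fun h => hiM (Finset.mem_inter.mpr ⟨h, hi⟩)
      refine prof _ T (hcond2 k M₀ hM₀ (hlose k hkl) i hi hiM') fun j => ?_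
      rw [Finset.union_inter_distrib_right]
      rcases lt_trichotomy j k with h | rfl | h
      · have hij : i ∉ S j := fun h' => Finset.disjoint_left.mp (hS.2.1 j k h.ne) h' hi
        rw [Finset.singleton_inter_of_notMem hij, Finset.union_empty]
        refine le_trans (Finset.card_le_card
          (Finset.inter_subset_inter_right Finset.inter_subset_left)) ?_
        rw [hQ j (h.trans hkl)]; exact hj j h
      · refine (Finset.card_union_le _ _).trans ?_
        have h1 : (M₀ ∩ blocksUpTo S j ∩ S j).card ≤ Q j := by
          rw [← hQ j hkl]
          exact Finset.card_le_card (Finset.inter_subset_inter_right Finset.inter_subset_left)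
        have h2 : ({i} ∩ S j).card ≤ 1 :=
          (Finset.card_le_card Finset.inter_subset_left).trans (Finset.card_singleton i).le
        omega
      · have hij : i ∉ S j := fun h' => Finset.disjoint_left.mp (hS.2.1 j k h.ne') h' hi
        rw [Finset.singleton_inter_of_notMem hij, inter_blocksUpTo_inter_of_lt hS M₀ h]
        simp
    · refine prof M₀ T hM₀.1 fun j => ?_
      rcases (Fin.le_last j).lt_or_eq with h | rfl
      · rw [hQ j h]; exact hj j h
      · rw [hQlast]; exact hk
  have pivot : ∀ M, IsMinimalWinning C M →
      ∃ k, (∀ j, j < k → (M ∩ S j).card = Q j) ∧ Q k < (M ∩ S k).card :=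
    fun M => exists_pivot hS hcond1 hM₀ hQ hlose hA
  refine ⟨Q, ⟨fun k => Finset.card_le_card Finset.inter_subset_right, ?_⟩, fun M => ⟨?_, ?_⟩⟩
  · have : (M₀ ∩ S (Fin.last K)).card ≤ (S (Fin.last K)).card :=
      Finset.card_le_card Finset.inter_subset_right
    omega
  · intro hM
    obtain ⟨k, hj, hk⟩ := pivot M hM
    obtain ⟨U, hU, hUc⟩ := Finset.exists_subset_card_eq hk.le
    obtain ⟨i, hi, hiU⟩ := Finset.exists_mem_notMem_of_card_lt_card (hUc.trans_lt hk)
    obtain ⟨hiM, hiS⟩ := Finset.mem_inter.mp hi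
    let T : Fin (K + 1) → Finset (Fin n) := fun t => if t = k then U else M ∩ S t
    have hTk : T k = U := by simp [T]
    have hTt : ∀ t, t ≠ k → T t = M ∩ S t := fun t ht => by simp [T, ht]
    have hTsub : ∀ t, T t ⊆ M ∩ S t := by
      intro t
      by_cases h : t = k
      · subst h; rw [hTk]; exact hU
      · rw [hTt t h]
    have hTc : ∀ t, t ≤ k → (T t).card = Q t := by
      intro t ht
      rcases ht.lt_or_eq with h | rfl
      · rw [hTt t h.ne]; exact hj t h
      · rw [hTk]; exact hUc
    refine ⟨k, T, i, fun t ht => ⟨(hTsub t).trans Finset.inter_subset_right, hTc t ht⟩, hiS,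
      by rwa [hTk], ?_⟩
    have hmemT : ∀ t, t ≤ k → T t ⊆
        ((Finset.univ.filter fun t => t ≤ k).biUnion T ∪ {i}) ∩ S t := by
      intro t ht x hx
      refine Finset.mem_inter.mpr ⟨Finset.mem_union_left _ (Finset.mem_biUnion.mpr
        ⟨t, by simp [ht], hx⟩), (Finset.mem_inter.mp (hTsub t hx)).2⟩
    by_contra hne'
    refine hM.2 _ (hB ((Finset.univ.filter fun t => t ≤ k).biUnion T ∪ {i}) k ?_ ?_)
      (Finset.ssubset_iff_subset_ne.mpr ⟨?_, fun h => hne' h.symm⟩)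
    · intro j hjk
      rw [← hTc j hjk.le]
      exact Finset.card_le_card (hmemT j hjk.le)
    · rw [← hTc k le_rfl]
      refine Finset.card_lt_card ((Finset.ssubset_iff_of_subset (hmemT k le_rfl)).mpr
        ⟨i, ?_, by rwa [hTk]⟩)
      simp [hiS]
    · intro x hx
      rcases Finset.mem_union.mp hx with hx | hx
      · obtain ⟨t, -, hxt⟩ := Finset.mem_biUnion.mp hx
        exact (Finset.mem_inter.mp (hTsub t hxt)).1
      · rw [Finset.mem_singleton.mp hx]; exact hiM
  · rintro ⟨k, T, i, hT, hiS, hiT, hMeq⟩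
    have hmemM : ∀ x, x ∈ M ↔ (∃ t, t ≤ k ∧ x ∈ T t) ∨ x = i := by
      intro x; rw [hMeq]; simp [or_comm]
    -- The profile of `M` is `Q` before `k`, `Q k + 1` at `k` and zero after `k`.
    have hblock : ∀ x t j, t ≤ k → x ∈ T t → x ∈ S j → t = j := by
      intro x t j ht hx hxj
      by_contra h
      exact Finset.disjoint_left.mp (hS.2.1 t j h) ((hT t ht).1 hx) hxj
    have hiblock : ∀ j, i ∈ S j → j = k := by
      intro j h
      by_contra hjk
      exact Finset.disjoint_left.mp (hS.2.1 j k hjk) h hiS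
    have hlt : ∀ j, j < k → (M ∩ S j).card = Q j := by
      intro j hj
      rw [← (hT j hj.le).2]
      congr 1
      ext x
      rw [Finset.mem_inter, hmemM]
      constructor
      · rintro ⟨⟨t, ht, hx⟩ | rfl, hxj⟩
        · rwa [← hblock x t j ht hx hxj]
        · exact absurd (hiblock j hxj) hj.ne
      · exact fun hx => ⟨Or.inl ⟨j, hj.le, hx⟩, (hT j hj.le).1 hx⟩
    have heq : (M ∩ S k).card = Q k + 1 := by
      rw [← (hT k le_rfl).2, ← Finset.card_insert_of_notMem hiT]
      congr 1
      ext x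
      rw [Finset.mem_inter, hmemM, Finset.mem_insert]
      constructor
      · rintro ⟨⟨t, ht, hx⟩ | rfl, hxj⟩
        · right; rwa [← hblock x t k ht hx hxj]
        · exact Or.inl rfl
      · rintro (rfl | hx)
        · exact ⟨Or.inr rfl, hiS⟩
        · exact ⟨Or.inl ⟨k, le_rfl, hx⟩, (hT k le_rfl).1 hx⟩
    have hgt : ∀ j, k < j → (M ∩ S j).card = 0 := by
      intro j hj
      rw [Finset.card_eq_zero]
      refine Finset.eq_empty_of_forall_notMem fun x hx => ?_
      rw [Finset.mem_inter, hmemM] at hx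
      obtain ⟨⟨t, ht, hx⟩ | rfl, hxj⟩ := hx
      · rw [← hblock x t j ht hx hxj] at hj
        exact absurd hj (not_lt.mpr ht)
      · exact absurd (hiblock j hxj) hj.ne'
    refine ⟨hB M k (fun j hj => (hlt j hj).ge) (by omega), fun W hW hWM => ?_⟩
    obtain ⟨M', hM', hM'W⟩ := exists_minimalWinning_subset C W hW
    have hM'M : M' ⊂ M := Finset.ssubset_of_subset_of_ssubset hM'W hWM
    obtain ⟨k', hj', hk'⟩ := pivot M' hM'
    have hle : ∀ j, (M' ∩ S j).card ≤ (M ∩ S j).card := fun j =>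
      Finset.card_le_card (Finset.inter_subset_inter_right hM'M.subset)
    have hkk : k' = k := by
      rcases lt_trichotomy k' k with h | h | h
      · have := hle k'; have := hlt k' h; omega
      · exact h
      · have := hle k'; have := hgt k' h; omega
    subst hkk
    refine hM'M.2 fun x hx => ?_
    have hxu : x ∈ Finset.univ.biUnion S := by rw [hS.2.2]; exact Finset.mem_univ x
    obtain ⟨j, -, hxj⟩ := Finset.mem_biUnion.mp hxu
    have hge : (M ∩ S j).card ≤ (M' ∩ S j).card := by
      rcases lt_trichotomy j k' with h | h | h
      · rw [hlt j h, hj' j h]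
      · subst h; omega
      · rw [hgt j h]; exact Nat.zero_le _
    have hE := Finset.eq_of_subset_of_card_le
      (Finset.inter_subset_inter_right (u := S j) hM'M.subset) hge
    have hx' : x ∈ M ∩ S j := Finset.mem_inter.mpr ⟨hx, hxj⟩
    rw [← hE] at hx'
    exact (Finset.mem_inter.mp hx').1
end

section
/- For every ordered partition S^o = (S_1, …, S_K) of Fin n and every quota vector Q compatible with S^o, the family C_{S^o,Q} is an antichain under inclusion: if M, M' ∈ C_{S^o,Q} and M ⊆ M', then M = M'. -/
/-- The number of elements of a member of `C_{S^o,Q}` in each block is determined by its index. -/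
lemma CSQ_profile {n K : ℕ} {S : Fin (K + 1) → Finset (Fin n)} {Q : Fin (K + 1) → ℕ}
    (hS : IsOrderedPartition S) {M : Finset (Fin n)} (hM : M ∈ CSQ S Q) :
    ∃ k, ∀ t, (M ∩ S t).card = if t < k then Q t else if t = k then Q k + 1 else 0 := by
  obtain ⟨k, T, i, hT, hiS, hiT, rfl⟩ := hM
  have hdis : ∀ {a b x}, x ∈ S a → x ∈ S b → a = b := by
    intro a b x ha hb
    by_contra hab
    exact Finset.disjoint_left.1 (hS.2.1 a b hab) ha hb
  refine ⟨k, fun t => ?_⟩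
  rcases lt_trichotomy t k with h | rfl | h
  · rw [if_pos h, ← (hT t h.le).2]
    congr 1
    ext x
    simp only [Finset.mem_inter, Finset.mem_union, Finset.mem_biUnion, Finset.mem_filter,
      Finset.mem_univ, true_and, Finset.mem_singleton]
    constructor
    · rintro ⟨⟨a, hak, hxa⟩ | rfl, hxt⟩
      · exact hdis ((hT a hak).1 hxa) hxt ▸ hxa
      · exact absurd (hdis hxt hiS) h.ne
    · exact fun hx => ⟨Or.inl ⟨t, h.le, hx⟩, (hT t h.le).1 hx⟩
  · rw [if_neg (lt_irrefl t), if_pos rfl, ← (hT t le_rfl).2, ← Finset.card_insert_of_notMem hiT]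
    congr 1
    ext x
    simp only [Finset.mem_inter, Finset.mem_union, Finset.mem_biUnion, Finset.mem_filter,
      Finset.mem_univ, true_and, Finset.mem_singleton, Finset.mem_insert]
    constructor
    · rintro ⟨⟨a, hak, hxa⟩ | rfl, hxt⟩
      · exact Or.inr (hdis ((hT a hak).1 hxa) hxt ▸ hxa)
      · exact Or.inl rfl
    · rintro (rfl | hx)
      · exact ⟨Or.inr rfl, hiS⟩
      · exact ⟨Or.inl ⟨t, le_rfl, hx⟩, (hT t le_rfl).1 hx⟩
  · rw [if_neg h.not_gt, if_neg h.ne', Finset.card_eq_zero, Finset.eq_empty_iff_forall_notMem]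
    intro x hx
    simp only [Finset.mem_inter, Finset.mem_union, Finset.mem_biUnion, Finset.mem_filter,
      Finset.mem_univ, true_and, Finset.mem_singleton] at hx
    obtain ⟨⟨a, hak, hxa⟩ | rfl, hxt⟩ := hx
    · exact absurd (hdis ((hT a hak).1 hxa) hxt) (hak.trans_lt h).ne
    · exact absurd (hdis hiS hxt) h.ne

/-- For every ordered partition `S` of `Fin n` and every compatible quota
vector `Q`, the family `C_{S^o,Q}` is an antichain under inclusion. -/
theorem CSQ_antichain
    (n K : ℕ) (S : Fin (K + 1) → Finset (Fin n)) (Q : Fin (K + 1) → ℕ)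
    (hS : IsOrderedPartition S) (hQ : CompatibleQuotas S Q) :
    ∀ M M' : Finset (Fin n), M ∈ CSQ S Q → M' ∈ CSQ S Q → M ⊆ M' → M = M' := by
  intro M M' hM hM' hsub
  obtain ⟨k, hk⟩ := CSQ_profile hS hM
  obtain ⟨k', hk'⟩ := CSQ_profile hS hM'
  have hle : (M ∩ S k).card ≤ (M' ∩ S k).card :=
    Finset.card_le_card (Finset.inter_subset_inter_right hsub)
  have hkk : k = k' := by
    rw [hk, hk', if_neg (lt_irrefl k), if_pos rfl] at hle
    rcases lt_trichotomy k k' with h | h | h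
    · rw [if_pos h] at hle
      omega
    · exact h
    · rw [if_neg h.not_gt, if_neg h.ne'] at hle
      omega
  subst hkk
  refine hsub.antisymm fun x hx => ?_
  obtain ⟨t, -, hxt⟩ := Finset.mem_biUnion.1 (hS.2.2 ▸ Finset.mem_univ x)
  have heq : M ∩ S t = M' ∩ S t :=
    Finset.eq_of_subset_of_card_le (Finset.inter_subset_inter_right hsub) (by rw [hk, hk'])
  exact (Finset.mem_inter.1 (heq ▸ Finset.mem_inter.2 ⟨hx, hxt⟩)).1
end

section
/- Let S^o = (S_1, …, S_K) be an ordered partition of Fin n and Q = (q_1, …, q_K) a compatible quota vector. For every W ⊆ Fin n, the following are equivalent: (a) there exists M ∈ C_{S^o,Q} with M ⊆ W; (b) there exists k ∈ {1, …, K} such that |W ∩ S_t| = q_t for all t < k and |W ∩ S_k| > q_k. (This is the combinatorial content of the claim that the sequential quota-voting game Γ_{S^o,Q} under truthful voting selects alternative x exactly when the set W of x-supporters contains a winning coalition of the committee generated by C_{S^o,Q}.) -/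
/-- Let `S` be an ordered partition of `Fin n` and `Q` a compatible quota
vector.  For every `W ⊆ Fin n`: some member of `C_{S^o,Q}` is contained in `W`
if and only if there is an index `k` such that `|W ∩ S t| = Q t` for all
`t < k` and `|W ∩ S k| > Q k`. -/
theorem CSQ_subset_iff_quota_profile
    (n K : ℕ) (S : Fin (K + 1) → Finset (Fin n)) (Q : Fin (K + 1) → ℕ)
    (hS : IsOrderedPartition S) (hQ : CompatibleQuotas S Q)
    (W : Finset (Fin n)) :
    (∃ M ∈ CSQ S Q, M ⊆ W) ↔
    (∃ k : Fin (K + 1),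
      (∀ t, t < k → (W ∩ S t).card = Q t) ∧ Q k < (W ∩ S k).card) := by
  constructor
  · rintro ⟨M, ⟨k, T, i, hT, hi, hiT, rfl⟩, hW⟩
    have hTW : ∀ t, t ≤ k → T t ⊆ W ∩ S t := fun t ht =>
      Finset.subset_inter
        (fun x hx => hW (Finset.mem_union_left _
          (Finset.mem_biUnion.2 ⟨t, Finset.mem_filter.2 ⟨Finset.mem_univ _, ht⟩, hx⟩)))
        (hT t ht).1
    have hle : ∀ t, t ≤ k → Q t ≤ (W ∩ S t).card := fun t ht =>
      (hT t ht).2 ▸ Finset.card_le_card (hTW t ht)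
    have hiW : i ∈ W := hW (Finset.mem_union_right _ (Finset.mem_singleton_self i))
    have hk : Q k < (W ∩ S k).card := by
      rw [← (hT k le_rfl).2]
      exact Finset.card_lt_card ((Finset.ssubset_iff_of_subset (hTW k le_rfl)).2
        ⟨i, Finset.mem_inter.2 ⟨hiW, hi⟩, hiT⟩)
    -- The witness is the first block in which `W` exceeds its quota, which need not be `k`.
    obtain ⟨m, hm, hmin⟩ := wellFounded_lt.has_min
      {t : Fin (K + 1) | Q t < (W ∩ S t).card} ⟨k, hk⟩
    have hmk : m ≤ k := not_lt.1 (hmin k hk)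
    exact ⟨m, fun t ht => le_antisymm (not_lt.1 fun h => hmin t h ht)
      (hle t (ht.le.trans hmk)), hm⟩
  · rintro ⟨k, heq, hk⟩
    have hle : ∀ t, t ≤ k → Q t ≤ (W ∩ S t).card := fun t ht =>
      ht.lt_or_eq.elim (fun h => (heq t h).ge) (fun h => h ▸ hk.le)
    have hex : ∀ t, ∃ U : Finset (Fin n), t ≤ k → U ⊆ W ∩ S t ∧ U.card = Q t := by
      intro t
      by_cases ht : t ≤ k
      · obtain ⟨U, hU⟩ := Finset.exists_subset_card_eq (hle t ht)
        exact ⟨U, fun _ => hU⟩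
      · exact ⟨∅, fun h => absurd h ht⟩
    choose T hT using hex
    obtain ⟨i, hi, hiT⟩ := Finset.exists_mem_notMem_of_card_lt_card
      ((hT k le_rfl).2.trans_lt hk)
    rw [Finset.mem_inter] at hi
    refine ⟨_, ⟨k, T, i, fun t ht => ⟨(hT t ht).1.trans Finset.inter_subset_right, (hT t ht).2⟩,
      hi.2, hiT, rfl⟩, ?_⟩
    refine Finset.union_subset (Finset.biUnion_subset.2 fun t ht => ?_)
      (Finset.singleton_subset_iff.2 hi.1)
    exact (hT t (Finset.mem_filter.1 ht).2).1.trans Finset.inter_subset_left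
end

section
/- Let n ≥ 1, let q be an integer with 1 ≤ q ≤ n, and let S_1, …, S_K be a partition of Fin n into K nonempty blocks. Then the following are equivalent: (a) there exist a permutation σ of {1, …, K} and a quota vector Q compatible with the ordered partition (S_{σ(1)}, …, S_{σ(K)}) such that C_{(S_{σ(1)},…,S_{σ(K)}),Q} = {M ⊆ Fin n : |M| = q}; (b) q = 1, or q = n, or K = 1, or (K = 2 and one of the two blocks has cardinality 1, equivalently the other has cardinality n − 1). (By the paper's Theorem 2, statement (a) is equivalent to the strongly anonymous extended majority voting rule with quota q being obviously strategy-proof with respect to the partition, so this is the combinatorial content of Theorem 3.) -/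
section
variable {n K : ℕ} {S : Fin (K + 1) → Finset (Fin n)} {Q : Fin (K + 1) → ℕ}

theorem IsOrderedPartition.comp_perm (hS : IsOrderedPartition S)
    (σ : Equiv.Perm (Fin (K + 1))) : IsOrderedPartition (S ∘ σ) := by
  obtain ⟨h1, h2, h3⟩ := hS
  refine ⟨fun k => h1 _, fun k l hkl => h2 _ _ (σ.injective.ne hkl), ?_⟩
  ext x
  have hx : x ∈ Finset.univ.biUnion S := h3 ▸ Finset.mem_univ x
  obtain ⟨k, -, hk⟩ := Finset.mem_biUnion.1 hx
  simp only [Finset.mem_biUnion, Finset.mem_univ, true_and, iff_true]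
  exact ⟨σ.symm k, by simpa using hk⟩

theorem IsOrderedPartition.exists_mem (hS : IsOrderedPartition S) (x : Fin n) :
    ∃ k, x ∈ S k := by
  have hx : x ∈ Finset.univ.biUnion S := hS.2.2 ▸ Finset.mem_univ x
  simpa using hx

theorem IsOrderedPartition.eq_of_mem (hS : IsOrderedPartition S) {x : Fin n}
    {k l : Fin (K + 1)} (hk : x ∈ S k) (hl : x ∈ S l) : k = l := by
  by_contra h
  exact Finset.disjoint_left.1 (hS.2.1 k l h) hk hl

theorem IsOrderedPartition.card_eq_sum (hS : IsOrderedPartition S) (M : Finset (Fin n)) :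
    M.card = ∑ t, (M ∩ S t).card := by
  rw [← Finset.card_biUnion, ← Finset.inter_biUnion, hS.2.2, Finset.inter_univ]
  intro k _ l _ hkl
  exact (hS.2.1 k l hkl).mono Finset.inter_subset_right Finset.inter_subset_right

/-- Membership in `CSQ S Q` in terms of the numbers of elements in the blocks. -/
theorem mem_CSQ_iff (hS : IsOrderedPartition S) (M : Finset (Fin n)) :
    M ∈ CSQ S Q ↔ ∃ k, (∀ t < k, (M ∩ S t).card = Q t) ∧ (M ∩ S k).card = Q k + 1 ∧
      ∀ t, k < t → M ∩ S t = ∅ := by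
  constructor
  · rintro ⟨k, T, i, hT, hi, hiT, rfl⟩
    refine ⟨k, fun t ht => ?_, ?_, fun t ht => ?_⟩
    · rw [← (hT t ht.le).2]
      congr 1
      ext x
      simp only [Finset.mem_inter, Finset.mem_union, Finset.mem_biUnion, Finset.mem_filter,
        Finset.mem_univ, true_and, Finset.mem_singleton]
      constructor
      · rintro ⟨⟨s, hs, hx⟩ | rfl, hxt⟩
        · rwa [hS.eq_of_mem hxt ((hT s hs).1 hx)]
        · exact absurd (hS.eq_of_mem hi hxt) ht.ne'
      · exact fun hx => ⟨Or.inl ⟨t, ht.le, hx⟩, (hT t ht.le).1 hx⟩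
    · rw [← (hT k le_rfl).2, ← Finset.card_insert_of_notMem hiT]
      congr 1
      ext x
      simp only [Finset.mem_inter, Finset.mem_union, Finset.mem_biUnion, Finset.mem_filter,
        Finset.mem_univ, true_and, Finset.mem_singleton, Finset.mem_insert]
      constructor
      · rintro ⟨⟨s, hs, hx⟩ | rfl, hxt⟩
        · right
          rwa [hS.eq_of_mem hxt ((hT s hs).1 hx)]
        · exact Or.inl rfl
      · rintro (rfl | hx)
        · exact ⟨Or.inr rfl, hi⟩
        · exact ⟨Or.inl ⟨k, le_rfl, hx⟩, (hT k le_rfl).1 hx⟩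
    · ext x
      simp only [Finset.mem_inter, Finset.mem_union, Finset.mem_biUnion, Finset.mem_filter,
        Finset.mem_univ, true_and, Finset.mem_singleton, Finset.notMem_empty, iff_false]
      rintro ⟨⟨s, hs, hx⟩ | rfl, hxt⟩
      · exact absurd (hS.eq_of_mem hxt ((hT s hs).1 hx)) (hs.trans_lt ht).ne'
      · exact absurd (hS.eq_of_mem hi hxt) ht.ne
  · rintro ⟨k, h1, h2, h3⟩
    obtain ⟨i, hi⟩ : (M ∩ S k).Nonempty := Finset.card_pos.1 (by omega)
    have hi' := Finset.mem_inter.1 hi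
    refine ⟨k, fun t => (M ∩ S t).erase i, i, fun t ht => ⟨?_, ?_⟩, hi'.2, by simp, ?_⟩
    · exact (Finset.erase_subset _ _).trans Finset.inter_subset_right
    · dsimp only
      rcases ht.lt_or_eq with h | rfl
      · rw [Finset.erase_eq_of_notMem, h1 t h]
        intro hit
        exact h.ne (hS.eq_of_mem (Finset.mem_inter.1 hit).2 hi'.2)
      · rw [Finset.card_erase_of_mem hi, h2]
        rfl
    · ext x
      simp only [Finset.mem_union, Finset.mem_biUnion, Finset.mem_filter,
        Finset.mem_univ, true_and, Finset.mem_singleton, Finset.mem_erase, Finset.mem_inter]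
      constructor
      · intro hx
        by_cases hxi : x = i
        · exact Or.inr hxi
        · obtain ⟨t, ht⟩ := hS.exists_mem x
          refine Or.inl ⟨t, ?_, hxi, hx, ht⟩
          by_contra hlt
          have := Finset.mem_inter.2 ⟨hx, ht⟩
          rw [h3 t (not_le.1 hlt)] at this
          simp at this
      · rintro (⟨t, -, -, hx, -⟩ | rfl)
        · exact hx
        · exact hi'.1

/-- A member of `CSQ S Q` meeting the last block has exactly `Q t` elements in every other block,
and `Q (Fin.last K) + 1` elements in the last one. -/
theorem card_inter_of_meets_last (hS : IsOrderedPartition S) {M : Finset (Fin n)} {x : Fin n}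
    (hx : x ∈ S (Fin.last K)) (hxM : x ∈ M) (hM : M ∈ CSQ S Q) (t : Fin (K + 1)) :
    (M ∩ S t).card = if t = Fin.last K then Q t + 1 else Q t := by
  obtain ⟨k, h1, h2, h3⟩ := (mem_CSQ_iff hS M).1 hM
  have hk : k = Fin.last K := by
    by_contra h
    have := Finset.mem_inter.2 ⟨hxM, hx⟩
    rw [h3 _ (Fin.lt_last_iff_ne_last.2 h)] at this
    simp at this
  subst hk
  split_ifs with h
  · rw [h, h2]
  · exact h1 t (Fin.lt_last_iff_ne_last.2 h)

/-- The exchange argument: for `2 ≤ q < n`, all agents other than a given member `x` of the last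
block lie in a common block. -/
theorem same_block_of_ne (hS : IsOrderedPartition S) {q : ℕ} (hq2 : 2 ≤ q) (hqn : q < n)
    (hC : CSQ S Q = { M : Finset (Fin n) | M.card = q }) {x y z : Fin n}
    (hx : x ∈ S (Fin.last K)) (hyx : y ≠ x) (hzx : z ≠ x) {s t : Fin (K + 1)}
    (hy : y ∈ S s) (hz : z ∈ S t) : s = t := by
  by_contra hst
  have hyz : y ≠ z := fun h => hst (hS.eq_of_mem hy (h ▸ hz))
  obtain ⟨M, hxyM, hMz, hMq⟩ := Finset.exists_subsuperset_card_eq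
    (s := {x, y}) (t := Finset.univ.erase z) (n := q)
    (by
      intro w hw
      simp only [Finset.mem_insert, Finset.mem_singleton] at hw
      rcases hw with rfl | rfl
      · simpa using hzx.symm
      · simpa using hyz)
    (by rw [Finset.card_pair hyx.symm]; exact hq2)
    (by rw [Finset.card_erase_of_mem (Finset.mem_univ z), Finset.card_univ, Fintype.card_fin]; omega)
  have hxM : x ∈ M := hxyM (by simp)
  have hyM : y ∈ M := hxyM (by simp)
  have hzM : z ∉ M := fun h => by simpa using hMz h
  have hM'q : (insert z (M.erase y)).card = q := by
    rw [Finset.card_insert_of_notMem (by simp [hzM]), Finset.card_erase_of_mem hyM]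
    omega
  have hmem : ∀ A : Finset (Fin n), A.card = q → A ∈ CSQ S Q := fun A hA => by rw [hC]; exact hA
  have h1 := card_inter_of_meets_last hS hx hxM (hmem _ hMq) s
  have h2 := card_inter_of_meets_last hS hx (M := insert z (M.erase y))
    (by simp [hyx.symm, hxM]) (hmem _ hM'q) s
  have h3 : insert z (M.erase y) ∩ S s = (M ∩ S s).erase y := by
    have hzs : z ∉ S s := fun h => hst (hS.eq_of_mem h hz)
    rw [Finset.insert_inter_of_notMem hzs, Finset.erase_inter]
  have hys : y ∈ M ∩ S s := Finset.mem_inter.2 ⟨hyM, hy⟩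
  have hpos := Finset.card_pos.2 ⟨y, hys⟩
  rw [h3, Finset.card_erase_of_mem hys, h1] at h2
  rw [h1] at hpos
  omega

theorem CSQ_zero (hS : IsOrderedPartition S) :
    CSQ S (fun _ => 0) = { M : Finset (Fin n) | M.card = 1 } := by
  ext M
  rw [mem_CSQ_iff hS, Set.mem_ofPred_eq]
  constructor
  · rintro ⟨k, h1, h2, h3⟩
    rw [hS.card_eq_sum, Finset.sum_eq_single k, h2]
    · intro t _ htk
      rcases lt_or_gt_of_ne htk with h | h
      · exact h1 t h
      · rw [h3 t h, Finset.card_empty]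
    · simp
  · intro hM
    obtain ⟨x, rfl⟩ := Finset.card_eq_one.1 hM
    obtain ⟨k, hk⟩ := hS.exists_mem x
    have key : ∀ t, t ≠ k → {x} ∩ S t = ∅ := fun t ht =>
      Finset.singleton_inter_of_notMem fun h => ht (hS.eq_of_mem h hk)
    refine ⟨k, fun t ht => ?_, ?_, fun t ht => key t ht.ne'⟩
    · rw [key t ht.ne, Finset.card_empty]
    · rw [Finset.singleton_inter_of_mem hk, Finset.card_singleton]

theorem CSQ_full (hS : IsOrderedPartition S) :
    CSQ S (fun t => if t = Fin.last K then (S t).card - 1 else (S t).card) =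
      { M : Finset (Fin n) | M.card = n } := by
  have hpos := Finset.card_pos.2 (hS.1 (Fin.last K))
  ext M
  rw [mem_CSQ_iff hS, Set.mem_ofPred_eq]
  constructor
  · rintro ⟨k, h1, h2, -⟩
    -- below the last block, exceeding the quota is impossible
    have hk : k = Fin.last K := by
      by_contra h
      have := Finset.card_le_card (Finset.inter_subset_right (s₁ := M) (s₂ := S k))
      simp only [h, if_false] at h2
      omega
    subst hk
    have key : ∀ t, (M ∩ S t).card = (Finset.univ ∩ S t).card := by
      intro t
      rw [Finset.univ_inter]
      by_cases h : t = Fin.last K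
      · subst h
        simp only [if_true] at h2
        omega
      · simpa [h] using h1 t (Fin.lt_last_iff_ne_last.2 h)
    rw [hS.card_eq_sum, Finset.sum_congr rfl fun t _ => key t, ← hS.card_eq_sum,
      Finset.card_univ, Fintype.card_fin]
  · intro hM
    have hM' : M = Finset.univ := (Finset.card_eq_iff_eq_univ M).1 (by simpa using hM)
    subst hM'
    refine ⟨Fin.last K, fun t ht => ?_, ?_, fun t ht => absurd (Fin.le_last t) (not_le.2 ht)⟩
    · simp [ht.ne]
    · simp only [Finset.univ_inter, if_true]
      omega

end

/-- Let `1 ≤ q ≤ n` and let `S` be a partition of `Fin n` into `K + 1` nonempty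
blocks.  There exist a permutation `σ` of the block indices and a quota vector
`Q` compatible with the reordered partition `S ∘ σ` such that
`C_{(S∘σ),Q} = {M : |M| = q}` if and only if `q = 1`, or `q = n`, or there is a
single block (`K = 0`), or there are two blocks one of which is a singleton
(`K = 1` and some block has cardinality `1`, equivalently the other has
cardinality `n - 1`). -/
theorem CSQ_eq_quota_family_iff
    (n K q : ℕ) (hn : 1 ≤ n) (hq1 : 1 ≤ q) (hqn : q ≤ n)
    (S : Fin (K + 1) → Finset (Fin n)) (hS : IsOrderedPartition S) :
    (∃ (σ : Equiv.Perm (Fin (K + 1))) (Q : Fin (K + 1) → ℕ),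
        CompatibleQuotas (S ∘ σ) Q ∧
        CSQ (S ∘ σ) Q = { M : Finset (Fin n) | M.card = q }) ↔
    (q = 1 ∨ q = n ∨ K = 0 ∨ (K = 1 ∧ ∃ k, (S k).card = 1)) := by
  constructor
  · rintro ⟨σ, Q, -, hC⟩
    by_cases h1 : q = 1
    · exact Or.inl h1
    by_cases h2 : q = n
    · exact Or.inr (Or.inl h2)
    by_cases h3 : K = 0
    · exact Or.inr (Or.inr (Or.inl h3))
    have hR := hS.comp_perm σ
    obtain ⟨x, hx⟩ := hR.1 (Fin.last K)
    have hblock := fun {y z : Fin n} => 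
      same_block_of_ne hR (q := q) (y := y) (z := z) (by omega) (by omega) hC hx
    have hne : ∀ {t y}, t ≠ Fin.last K → y ∈ (S ∘ σ) t → y ≠ x := by
      rintro t y ht hy rfl
      exact ht (hR.eq_of_mem hy hx)
    have h0 : (0 : Fin (K + 1)) ≠ Fin.last K := by
      simp [Fin.ext_iff]; omega
    obtain ⟨y, hy⟩ := hR.1 0
    refine Or.inr (Or.inr (Or.inr ⟨?_, σ (Fin.last K), ?_⟩))
    · by_contra hK
      have hlast : (⟨1, by omega⟩ : Fin (K + 1)) ≠ Fin.last K := by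
        simp [Fin.ext_iff]; omega
      obtain ⟨z, hz⟩ := hR.1 ⟨1, by omega⟩
      have := hblock (hne h0 hy) (hne hlast hz) hy hz
      simp [Fin.ext_iff] at this
    · refine Finset.card_eq_one.2 ⟨x, Finset.eq_singleton_iff_unique_mem.2 ⟨hx, fun z hz => ?_⟩⟩
      by_contra hzx
      exact h0 (hblock (hne h0 hy) hzx hy hz)
  · have hpos := fun k => Finset.card_pos.2 (hS.1 k)
    rintro (rfl | rfl | rfl | ⟨rfl, k, hk⟩)
    · exact ⟨1, fun _ => 0, ⟨fun k => Nat.zero_le _, hpos _⟩, CSQ_zero hS⟩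
    · refine ⟨1, _, ⟨fun k => ?_, ?_⟩, CSQ_full hS⟩
      · dsimp
        split_ifs <;> omega
      · have := hpos (Fin.last K)
        simp only [if_true, Function.comp, Equiv.Perm.coe_one, id]
        omega
    · have huniv : S 0 = Finset.univ := by simpa using hS.2.2
      refine ⟨1, fun _ => q - 1, ⟨fun k => ?_, ?_⟩, ?_⟩
      · rw [show k = 0 from Fin.fin_one_eq_zero k]
        simp [huniv]
        omega
      · simp [huniv]
        omega
      · ext M
        rw [mem_CSQ_iff (hS.comp_perm 1)]
        simp [huniv]
        omega
    · -- reorder so that the singleton block comes last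
      have hR := hS.comp_perm (Equiv.swap 1 k)
      have hR1 : ((S ∘ Equiv.swap 1 k) 1).card = 1 := by simpa using hk
      have hcard := hR.card_eq_sum
      replace hcard := fun M => (hcard M).trans (Fin.sum_univ_two _)
      have hn0 := hcard Finset.univ
      simp only [Finset.univ_inter, Finset.card_univ, Fintype.card_fin, hR1] at hn0
      refine ⟨Equiv.swap 1 k, ![q - 1, 0], ⟨?_, ?_⟩, ?_⟩
      · rw [Fin.forall_fin_two]
        exact ⟨by change q - 1 ≤ _; omega, Nat.zero_le _⟩
      · change 0 < ((S ∘ Equiv.swap 1 k) 1).card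
        omega
      · ext M
        have hM := hcard M
        have hle : (M ∩ (S ∘ Equiv.swap 1 k) 1).card ≤ 1 :=
          (Finset.card_le_card Finset.inter_subset_right).trans hR1.le
        rw [mem_CSQ_iff hR, Set.mem_ofPred_eq, hM]
        constructor
        · rintro ⟨t, h1, h2, h3⟩
          rcases (Fin.forall_fin_two (p := fun t => t = 0 ∨ t = 1)).2 (by simp) t with rfl | rfl
          · have h4 := Finset.card_eq_zero.2 (h3 1 Fin.zero_lt_one)
            change _ = q - 1 + 1 at h2
            omega
          · have h4 : _ = q - 1 := h1 0 Fin.zero_lt_one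
            change _ = 0 + 1 at h2
            omega
        · intro hq
          rcases Nat.eq_zero_or_pos (M ∩ (S ∘ Equiv.swap 1 k) 1).card with h | h
          · refine ⟨0, fun t ht => absurd ht (Fin.not_lt_zero t), ?_,
              Fin.forall_fin_two.2 ⟨fun h => absurd h (lt_irrefl _), fun _ => Finset.card_eq_zero.1 h⟩⟩
            change _ = q - 1 + 1
            omega
          · refine ⟨1, Fin.forall_fin_two.2 ⟨fun _ => ?_, fun h => absurd h (lt_irrefl _)⟩, ?_,
              fun t ht => absurd (Fin.le_last t) (not_le.2 ht)⟩
            · change _ = q - 1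
              omega
            · change _ = 0 + 1
              omega
end
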